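/- arXiv:2109.09245 — 2 statements merged into one kernel-verified Lean document; each statement's English description precedes it below -/
import Mathlib

section
/- Let n ≥ 1, let σ be the permutation of ZMod (2n) given by σ(x) = x + 1, and let τ be a fixed-point-free involution of ZMod (2n) (τ ∘ τ = id and τ(x) ≠ x for all x). For x ≠ z in ZMod (2n) let d(x,z) ∈ {1, …, 2n−1} be the unique k with z = x + k. Say that the chords of x and of y interlace if the sets {x, τ(x)} and {y, τ(y)} are disjoint and exactly one of the two inequalities d(x,y) < d(x,τ(x)) and d(x,τ(y)) < d(x,τ(x)) holds. Let N be the (2n) × (2n) matrix over ZMod 2 with N(x,y) = 1 if the chords of x and of y interlace and N(x,y) = 0 otherwise. Then the number of orbits of the permutation τ ∘ σ acting on ZMod (2n) (the number of cycles, counting fixed points as orbits) equals n − rank(N) + 1. -/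
attribute [local instance] Classical.propDecidable

/-!
Label the points of the circle by elements of a field `K` of characteristic two, and let
`D f x = f x - f (x - 1)`, `P f = f + f ∘ τ`, and `M g x = ∑ g` over the open arc from `x` to `τ x`.
Telescoping gives `M (D f) x = f (τ x - 1) - f x`, so `ker (M ∘ D)` consists of the labellings that
are constant on the cycles of `τ ∘ σ`. On the other hand `M ∘ P` is the interlacement matrix.
Labellings in `ker (M ∘ D)` satisfy `D f = P f`, while `range P ≤ range D` because every `P f` sums
to zero; hence `ker M` meets `range D` and `range P` in the same subspace, and the nullities of
`M ∘ D` and `M ∘ P` differ only through `ker D` (the constants) and `ker P` (of dimension `n`).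
-/

open Module

namespace CircuitNullity

section LinearAlgebra

variable {K U V W : Type*} [DivisionRing K] [AddCommGroup U] [Module K U]
  [AddCommGroup V] [Module K V] [AddCommGroup W] [Module K W] [FiniteDimensional K U]

lemma finrank_ker_comp (f : U →ₗ[K] V) (g : V →ₗ[K] W) :
    finrank K (LinearMap.ker (g ∘ₗ f)) =
      finrank K (LinearMap.ker f) +
        finrank K (LinearMap.ker g ⊓ LinearMap.range f : Submodule K V) := by
  have ker_le : LinearMap.ker f ≤ LinearMap.ker (g ∘ₗ f) := LinearMap.ker_le_ker_comp f g
  have rank_nullity := (f.domRestrict (LinearMap.ker (g ∘ₗ f))).finrank_range_add_finrank_ker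
  rw [LinearMap.range_domRestrict, LinearMap.ker_domRestrict, LinearMap.ker_comp,
    Submodule.map_comap_eq, inf_comm, ← LinearMap.ker_comp] at rank_nullity
  rw [← rank_nullity, add_comm, (Submodule.comapSubtypeEquivOfLe ker_le).finrank_eq]

end LinearAlgebra

section InvariantFunctions

variable {R α : Type*} [Ring R]

lemma apply_eq_of_mem_zpowers {β : Type*} {p g : Equiv.Perm α} {f : α → β}
    (hf : ∀ x, f (p x) = f x) (hg : g ∈ Subgroup.zpowers p) (x : α) : f (g x) = f x := by
  obtain ⟨k, rfl⟩ := Subgroup.mem_zpowers_iff.mp hg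
  clear hg
  induction k generalizing x with
  | zero => simp
  | succ i ih => rw [zpow_add_one, Equiv.Perm.mul_apply, ih, hf]
  | pred i ih =>
    rw [zpow_sub_one, Equiv.Perm.mul_apply, ih, ← hf (p⁻¹ x), ← Equiv.Perm.mul_apply,
      mul_inv_cancel, Equiv.Perm.one_apply]

lemma range_funLeft_orbitRel_mk (p : Equiv.Perm α) :
    LinearMap.range (LinearMap.funLeft R R
        (Quotient.mk (MulAction.orbitRel (Subgroup.zpowers p) α))) =
      (LinearMap.funLeft R R p).fixedSubmodule := by
  ext f
  rw [LinearMap.mem_fixedSubmodule_iff]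
  constructor
  · rintro ⟨h, rfl⟩
    ext x
    exact congrArg h (Quotient.sound ⟨⟨p, Subgroup.mem_zpowers p⟩, rfl⟩)
  · intro hf
    have invariant : ∀ a b, MulAction.orbitRel (Subgroup.zpowers p) α a b → f a = f b := by
      rintro _ b ⟨⟨g, hg⟩, rfl⟩
      exact apply_eq_of_mem_zpowers (congrFun hf) hg b
    exact ⟨Quotient.lift f invariant, rfl⟩

lemma finrank_fixedSubmodule_funLeft [StrongRankCondition R] [Finite α] (p : Equiv.Perm α) :
    finrank R (LinearMap.funLeft R R p).fixedSubmodule =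
      Nat.card (MulAction.orbitRel.Quotient (Subgroup.zpowers p) α) := by
  have := Fintype.ofFinite (MulAction.orbitRel.Quotient (Subgroup.zpowers p) α)
  rw [← range_funLeft_orbitRel_mk, LinearMap.finrank_range_of_inj
    (LinearMap.funLeft_injective_of_surjective _ _ _ Quotient.mk_surjective),
    Nat.card_eq_fintype_card]
  exact finrank_fintype_fun_eq_card R

end InvariantFunctions

section Symmetrization

variable {R α : Type*} [Ring R]

/-- The operator `f ↦ f + f ∘ τ`. For an involution `τ` its values are constant on the pairs
`{x, τ x}`, so it turns labellings of points into labellings of chords. -/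
def symmetrization (R : Type*) [Ring R] (τ : Equiv.Perm α) : (α → R) →ₗ[R] (α → R) :=
  LinearMap.id + LinearMap.funLeft R R τ

lemma symmetrization_apply (τ : Equiv.Perm α) (f : α → R) (x : α) :
    symmetrization R τ f x = f x + f (τ x) := rfl

variable [CharP R 2]

lemma sum_symmetrization [Fintype α] (τ : Equiv.Perm α) (f : α → R) :
    ∑ x, symmetrization R τ f x = 0 := by
  simp only [symmetrization_apply, Finset.sum_add_distrib, Equiv.sum_comp τ f,
    CharTwo.add_self_eq_zero]

lemma mem_ker_symmetrization {τ : Equiv.Perm α} {f : α → R} :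
    f ∈ LinearMap.ker (symmetrization R τ) ↔ ∀ x, f (τ x) = f x := by
  simp only [LinearMap.mem_ker, funext_iff, symmetrization_apply, Pi.zero_apply,
    CharTwo.add_eq_zero, eq_comm (a := f (τ _))]

lemma range_symmetrization {τ : Equiv.Perm α} (hinv : Function.Involutive τ)
    (hfp : ∀ x, τ x ≠ x) :
    LinearMap.range (symmetrization R τ) = LinearMap.ker (symmetrization R τ) := by
  ext g
  rw [mem_ker_symmetrization]
  constructor
  · rintro ⟨f, rfl⟩ x
    rw [symmetrization_apply, symmetrization_apply, hinv, add_comm]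
  · intro hg
    -- Any linear order selects one point of each pair `{x, τ x}`; restrict `g` to these points.
    let _ : LinearOrder α := IsWellOrder.linearOrder WellOrderingRel
    refine ⟨fun x => if x < τ x then g x else 0, funext fun x => ?_⟩
    rw [symmetrization_apply, hinv, hg]
    rcases (hfp x).lt_or_gt with h | h
    · rw [if_neg h.not_gt, if_pos h, zero_add]
    · rw [if_pos h, if_neg h.not_gt, add_zero]

lemma two_mul_finrank_ker_symmetrization {K : Type*} [DivisionRing K] [CharP K 2] [Fintype α]
    {τ : Equiv.Perm α} (hinv : Function.Involutive τ) (hfp : ∀ x, τ x ≠ x) :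
    2 * finrank K (LinearMap.ker (symmetrization K τ)) = Fintype.card α := by
  have rank_nullity := (symmetrization K τ).finrank_range_add_finrank_ker
  rwa [range_symmetrization hinv hfp, finrank_fintype_fun_eq_card, ← two_mul] at rank_nullity

end Symmetrization

section CyclicDifference

variable {R : Type*} [Ring R] {m : ℕ}

/-- The backward difference operator `f ↦ (x ↦ f x - f (x - 1))` on the cycle `ZMod m`. -/
def cyclicDiff (R : Type*) [Ring R] (m : ℕ) : (ZMod m → R) →ₗ[R] (ZMod m → R) :=
  LinearMap.id - LinearMap.funLeft R R (· - 1)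

lemma cyclicDiff_apply (f : ZMod m → R) (x : ZMod m) :
    cyclicDiff R m f x = f x - f (x - 1) := rfl

variable [NeZero m]

lemma ker_cyclicDiff : LinearMap.ker (cyclicDiff R m) = Submodule.span R {1} := by
  ext f
  rw [LinearMap.mem_ker, Submodule.mem_span_singleton]
  constructor
  · intro hf
    have step (x : ZMod m) : f x = f (x - 1) := sub_eq_zero.mp (congrFun hf x)
    have const (k : ℕ) : f k = f 0 := by
      induction k with
      | zero => rw [Nat.cast_zero]
      | succ k ih => rw [step, Nat.cast_succ, add_sub_cancel_right, ih]
    refine ⟨f 0, funext fun x => ?_⟩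
    rw [← ZMod.natCast_zmod_val x, const, Pi.smul_apply, Pi.one_apply, smul_eq_mul, mul_one]
  · rintro ⟨c, rfl⟩
    exact funext fun _ => sub_self (c * 1)

lemma sum_cyclicDiff (f : ZMod m → R) : ∑ x, cyclicDiff R m f x = 0 := by
  simp only [cyclicDiff_apply, Finset.sum_sub_distrib]
  exact sub_eq_zero.mpr (Equiv.sum_comp (Equiv.subRight 1) f).symm

lemma finrank_ker_cyclicDiff {K : Type*} [DivisionRing K] :
    finrank K (LinearMap.ker (cyclicDiff K m)) = 1 := by
  rw [ker_cyclicDiff, finrank_span_singleton one_ne_zero]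

lemma mem_range_cyclicDiff {K : Type*} [Field K] {g : ZMod m → K} :
    g ∈ LinearMap.range (cyclicDiff K m) ↔ ∑ x, g x = 0 := by
  let total : Dual K (ZMod m → K) := ∑ x, LinearMap.proj x
  have total_apply (f : ZMod m → K) : total f = ∑ x, f x := by
    simp only [total, LinearMap.sum_apply, LinearMap.proj_apply]
  have total_ne_zero : total ≠ 0 := fun h => by
    simpa [total_apply] using LinearMap.congr_fun h (Pi.single 0 1)
  have range_le : LinearMap.range (cyclicDiff K m) ≤ LinearMap.ker total := by
    rintro _ ⟨f, rfl⟩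
    rw [LinearMap.mem_ker, total_apply, sum_cyclicDiff]
  have finrank_eq :
      finrank K (LinearMap.range (cyclicDiff K m)) = finrank K (LinearMap.ker total) := by
    have rank_nullity := (cyclicDiff K m).finrank_range_add_finrank_ker
    rw [finrank_ker_cyclicDiff, ← Dual.finrank_ker_add_one_of_ne_zero total_ne_zero]
      at rank_nullity
    exact Nat.add_right_cancel rank_nullity
  rw [Submodule.eq_of_le_of_finrank_eq range_le finrank_eq, LinearMap.mem_ker, total_apply]

end CyclicDifference

section OpenArc

variable {R : Type*} [Ring R] {m : ℕ} [NeZero m]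

/-- The points met strictly between `x` and `z` when going around the cycle `ZMod m` from `x` in
the positive direction; empty when `z = x`. -/
def openArc (x z : ZMod m) : Finset (ZMod m) :=
  {y | 0 < (y - x).val ∧ (y - x).val < (z - x).val}

lemma mem_openArc {x y z : ZMod m} :
    y ∈ openArc x z ↔ y ≠ x ∧ (y - x).val < (z - x).val := by
  rw [openArc, Finset.mem_filter_univ, ZMod.val_pos, sub_ne_zero]

lemma sum_openArc {M : Type*} [AddCommMonoid M] (g : ZMod m → M) (x z : ZMod m) :
    ∑ y ∈ openArc x z, g y = ∑ k ∈ Finset.range ((z - x).val - 1), g (x + (k + 1 : ℕ)) := by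
  have val_shift {k : ℕ} (hk : k < (z - x).val - 1) :
      (x + (k + 1 : ℕ) - x).val = k + 1 := by
    have := (z - x).val_lt
    rw [add_sub_cancel_left, ZMod.val_natCast_of_lt (by lia)]
  symm
  refine Finset.sum_nbij' (fun k => x + (k + 1 : ℕ)) (fun y => (y - x).val - 1) ?_ ?_ ?_ ?_ ?_
  · intro k hk
    rw [Finset.mem_range] at hk
    rw [openArc, Finset.mem_filter_univ, val_shift hk]
    lia
  · intro y hy
    rw [openArc, Finset.mem_filter_univ] at hy
    rw [Finset.mem_range]
    lia
  · intro k hk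
    rw [val_shift (Finset.mem_range.mp hk), Nat.add_sub_cancel]
  · intro y hy
    rw [openArc, Finset.mem_filter_univ] at hy
    rw [Nat.sub_add_cancel hy.1, ZMod.natCast_zmod_val, add_sub_cancel]
  · exact fun _ _ => rfl

lemma sum_openArc_cyclicDiff (f : ZMod m → R) {x z : ZMod m} (hxz : z ≠ x) :
    ∑ y ∈ openArc x z, cyclicDiff R m f y = f (z - 1) - f x := by
  have val_pos : 1 ≤ (z - x).val := ZMod.val_pos.mpr (sub_ne_zero.mpr hxz)
  have last : x + ((z - x).val - 1 : ℕ) = z - 1 := by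
    rw [Nat.cast_sub val_pos, ZMod.natCast_zmod_val, Nat.cast_one, add_sub_assoc', add_sub_cancel]
  calc ∑ y ∈ openArc x z, cyclicDiff R m f y
      = ∑ k ∈ Finset.range ((z - x).val - 1), (f (x + (k + 1 : ℕ)) - f (x + (k : ℕ))) := by
        simp only [sum_openArc, cyclicDiff_apply, Nat.cast_succ, ← add_assoc,
          add_sub_cancel_right]
    _ = f (z - 1) - f x := by
        rw [Finset.sum_range_sub fun k : ℕ => f (x + k), last, Nat.cast_zero, add_zero]

/-- The operator sending `g` to `x ↦ ∑ g y`, with `y` running over the open arc from `x` to the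
other endpoint `τ x` of its chord. -/
def openArcSum (R : Type*) [Ring R] (τ : Equiv.Perm (ZMod m)) :
    (ZMod m → R) →ₗ[R] (ZMod m → R) :=
  LinearMap.pi fun x => ∑ y ∈ openArc x (τ x), LinearMap.proj y

lemma openArcSum_apply (τ : Equiv.Perm (ZMod m)) (g : ZMod m → R) (x : ZMod m) :
    openArcSum R τ g x = ∑ y ∈ openArc x (τ x), g y := by
  simp only [openArcSum, LinearMap.pi_apply, LinearMap.sum_apply, LinearMap.proj_apply]

variable {τ : Equiv.Perm (ZMod m)}

lemma mem_ker_openArcSum_comp_cyclicDiff (hfp : ∀ x, τ x ≠ x) {f : ZMod m → R} :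
    f ∈ LinearMap.ker (openArcSum R τ ∘ₗ cyclicDiff R m) ↔ ∀ x, f (τ x - 1) = f x := by
  simp only [LinearMap.mem_ker, funext_iff, LinearMap.comp_apply, openArcSum_apply,
    sum_openArc_cyclicDiff f (hfp _), Pi.zero_apply, sub_eq_zero]

lemma ker_openArcSum_comp_cyclicDiff (hinv : Function.Involutive τ) (hfp : ∀ x, τ x ≠ x) :
    LinearMap.ker (openArcSum R τ ∘ₗ cyclicDiff R m) =
      (LinearMap.funLeft R R ⇑(τ * Equiv.addRight (1 : ZMod m))).fixedSubmodule := by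
  ext f
  rw [mem_ker_openArcSum_comp_cyclicDiff hfp, LinearMap.mem_fixedSubmodule_iff, funext_iff,
    ← (τ * Equiv.addRight (1 : ZMod m)).forall_congr_right]
  simp only [Equiv.Perm.mul_apply, Equiv.coe_addRight, hinv _, add_sub_cancel_right,
    LinearMap.funLeft_apply]
  exact forall_congr' fun _ => eq_comm

lemma ker_openArcSum_inf_range_cyclicDiff {K : Type*} [Field K] [CharP K 2]
    (hinv : Function.Involutive τ) (hfp : ∀ x, τ x ≠ x) :
    LinearMap.ker (openArcSum K τ) ⊓ LinearMap.range (cyclicDiff K m) =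
      LinearMap.ker (openArcSum K τ) ⊓ LinearMap.range (symmetrization K τ) := by
  apply le_antisymm
  · rintro _ ⟨hM, f, rfl⟩
    have hf : ∀ x, f (τ x - 1) = f x := (mem_ker_openArcSum_comp_cyclicDiff hfp).mp hM
    refine ⟨hM, f, funext fun x => ?_⟩
    rw [symmetrization_apply, cyclicDiff_apply, CharTwo.sub_eq_add, ← hf (τ x), hinv]
  · refine inf_le_inf_left _ ?_
    rintro _ ⟨f, rfl⟩
    exact mem_range_cyclicDiff.mpr (sum_symmetrization τ f)

end OpenArc

section Interlacement

variable {R : Type*} [CommRing R] {m : ℕ} {τ : Equiv.Perm (ZMod m)}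

/-- The chords `{x, τ x}` and `{y, τ y}` are disjoint and exactly one endpoint of the second lies
on the arc from `x` to `τ x`. -/
def Interlaced (τ : Equiv.Perm (ZMod m)) (x y : ZMod m) : Prop :=
  Disjoint ({x, τ x} : Set (ZMod m)) {y, τ y} ∧
    Xor ((y - x).val < (τ x - x).val) ((τ y - x).val < (τ x - x).val)

/-- The interlacement matrix of the chord diagram `τ`. It is indexed by endpoints rather than by
chords, so each chord contributes two equal rows and two equal columns. -/
noncomputable def interlacementMatrix (R : Type*) [CommRing R] (τ : Equiv.Perm (ZMod m)) :
    Matrix (ZMod m) (ZMod m) R :=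
  fun x y => if Interlaced τ x y then 1 else 0

variable [NeZero m]

lemma interlaced_iff_xor_mem_openArc (hinv : Function.Involutive τ) (x y : ZMod m) :
    Interlaced τ x y ↔ Xor (y ∈ openArc x (τ x)) (τ y ∈ openArc x (τ x)) := by
  simp only [Interlaced, mem_openArc]
  by_cases hyx : y = x
  · simp [hyx, (Set.insert_nonempty x {τ x}).ne_empty]
  by_cases hτyx : τ y = x
  · simp [← hτyx, hinv y]
  have hyτx : y ≠ τ x := fun h => hτyx (h ▸ hinv x)
  simp [hyx, hτyx, hyτx, τ.injective.eq_iff]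

lemma mulVecLin_interlacementMatrix [CharP R 2] (hinv : Function.Involutive τ) :
    (interlacementMatrix R τ).mulVecLin = openArcSum R τ ∘ₗ symmetrization R τ := by
  have entry (x y : ZMod m) : interlacementMatrix R τ x y =
      (if y ∈ openArc x (τ x) then 1 else 0) + if τ y ∈ openArc x (τ x) then 1 else 0 := by
    rw [interlacementMatrix, interlaced_iff_xor_mem_openArc hinv]
    by_cases hy : y ∈ openArc x (τ x) <;> by_cases hτy : τ y ∈ openArc x (τ x) <;>
      simp [hy, hτy, CharTwo.add_self_eq_zero]
  refine LinearMap.ext fun f => funext fun x => ?_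
  calc (interlacementMatrix R τ).mulVecLin f x
      = ∑ y, interlacementMatrix R τ x y * f y := rfl
    _ = ∑ y ∈ openArc x (τ x), f y + ∑ y, if τ y ∈ openArc x (τ x) then f y else 0 := by
        simp only [entry, add_mul, ite_mul, one_mul, zero_mul, Finset.sum_add_distrib,
          Finset.sum_ite_mem, Finset.univ_inter]
    _ = ∑ y ∈ openArc x (τ x), f y + ∑ y ∈ openArc x (τ x), f (τ y) := by
        rw [← Equiv.sum_comp τ]
        simp only [hinv _, Finset.sum_ite_mem, Finset.univ_inter]
    _ = openArcSum R τ (symmetrization R τ f) x := by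
        simp only [openArcSum_apply, symmetrization_apply, Finset.sum_add_distrib]

end Interlacement

end CircuitNullity

open CircuitNullity

/-- The circuit-nullity formula.  A chord diagram with `n` chords on a circle with `2n`
marked points `ZMod (2n)` is encoded by a fixed-point-free involution `τ`; surgery along
all chords produces circles corresponding to the cycles of `τ ∘ σ`, where `σ (x) = x + 1`.
The number of such cycles equals `n - rank N + 1`, where `N` is the `ZMod 2`-valued
interlacement matrix of the chord diagram. -/
theorem circuit_nullity_formula (n : ℕ) [NeZero n] (hn : 1 ≤ n)
    (τ : Equiv.Perm (ZMod (2 * n)))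
    (hinv : ∀ x, τ (τ x) = x) (hfp : ∀ x, τ x ≠ x) :
    ∀ d : ZMod (2 * n) → ZMod (2 * n) → ℕ, (d = fun x z => (z - x).val) →
    ∀ interlace : ZMod (2 * n) → ZMod (2 * n) → Prop,
      (interlace = fun x y =>
        Disjoint ({x, τ x} : Set (ZMod (2 * n))) ({y, τ y} : Set (ZMod (2 * n))) ∧
          Xor' (d x y < d x (τ x)) (d x (τ y) < d x (τ x))) →
    ∀ N : Matrix (ZMod (2 * n)) (ZMod (2 * n)) (ZMod 2),
      (N = fun x y => if interlace x y then 1 else 0) →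
    Nat.card (MulAction.orbitRel.Quotient
        (Subgroup.zpowers (τ * Equiv.addRight (1 : ZMod (2 * n)))) (ZMod (2 * n)))
      = n - N.rank + 1 := by
  rintro _ rfl _ rfl N (hN : N = interlacementMatrix (ZMod 2) τ)
  have cycles := finrank_fixedSubmodule_funLeft (R := ZMod 2) (τ * Equiv.addRight 1)
  rw [← ker_openArcSum_comp_cyclicDiff hinv hfp, finrank_ker_comp, finrank_ker_cyclicDiff,
    ker_openArcSum_inf_range_cyclicDiff hinv hfp] at cycles
  have nullity := finrank_ker_comp (symmetrization (ZMod 2) τ) (openArcSum (ZMod 2) τ)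
  rw [← mulVecLin_interlacementMatrix hinv, ← hN] at nullity
  have chords := two_mul_finrank_ker_symmetrization (K := ZMod 2) hinv hfp
  have rank_nullity : N.rank + _ = _ := N.mulVecLin.finrank_range_add_finrank_ker
  rw [ZMod.card] at chords
  rw [finrank_fintype_fun_eq_card, ZMod.card] at rank_nullity
  lia
end

section
/- Let n : ℕ and let u, w : Fin n → ℕ take values in {0,1}, with w k ≤ u k for all k, and suppose ∑_k u k = (∑_k w k) + 2, so that u and w differ in exactly two positions i < j. Let v₁ be w updated to have value 1 at position i, and v₂ be w updated to have value 1 at position j (these are exactly the labelings v with w ≤ v ≤ u and ∑ v = ∑ w + 1). Define, for a pair (x, y) of such 0–1 vectors differing in a single position m, the sign exponent s₀(x,y) = ∑_{k < m} x k. Then s₀(u,v₁) + s₀(v₁,w) + s₀(u,v₂) + s₀(v₂,w) is odd; equivalently, (−1)^{s₀(u,v₁)+s₀(v₁,w)} = −(−1)^{s₀(u,v₂)+s₀(v₂,w)}. -/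
/-!
Along an edge in direction `m` the exponent only sees the coordinates before `m`. Hence it ignores
whether coordinate `m` itself has been switched, so for `i < j` the two edges in direction `i` have
equal exponents. The two edges in direction `j` differ only in that coordinate `i`, which counts
towards their exponents, is switched on in one and off in the other. The total is therefore odd.
-/

section SignExponent

variable {ι : Type*} [Preorder ι] [LocallyFiniteOrderBot ι]

/-- The exponent `s₀` of the sign of an edge of the resolution cube. An edge is given by one of its
endpoints `x` and its direction `m`, the only coordinate in which its endpoints differ; either
endpoint gives the same exponent, by `signExponent_update_of_not_lt`. -/
def signExponent (x : ι → ℕ) (m : ι) : ℕ :=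
  ∑ k ∈ Finset.Iio m, x k

theorem signExponent_congr {x y : ι → ℕ} {m : ι} (h : ∀ k < m, x k = y k) :
    signExponent x m = signExponent y m :=
  Finset.sum_congr rfl fun k hk => h k (Finset.mem_Iio.1 hk)

variable [DecidableEq ι]

theorem signExponent_update_of_not_lt (x : ι → ℕ) {i m : ι} (him : ¬i < m) (a : ℕ) :
    signExponent (Function.update x i a) m = signExponent x m :=
  Finset.sum_update_of_notMem (mt Finset.mem_Iio.1 him) x a

theorem signExponent_update_add_of_lt (x : ι → ℕ) {i m : ι} (him : i < m) (a : ℕ) :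
    signExponent (Function.update x i a) m + x i = signExponent x m + a := by
  have hi : i ∈ Finset.Iio m := Finset.mem_Iio.2 him
  rw [signExponent, signExponent, Finset.sum_update_of_mem hi,
    Finset.sum_eq_add_sum_sdiff_singleton_of_mem hi x]
  ring

end SignExponent

theorem neg_one_pow_eq_neg_of_odd_add {R : Type*} [Monoid R] [HasDistribNeg R] {a b : ℕ}
    (h : Odd (a + b)) : (-1 : R) ^ a = -(-1) ^ b := by
  rcases b.even_or_odd with hb | hb
  · rw [(Nat.odd_add.1 h |>.2 hb).neg_one_pow, hb.neg_one_pow]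
  · rw [(Nat.odd_add'.1 h |>.1 hb).neg_one_pow, hb.neg_one_pow, neg_neg]

theorem khovanov_square_sign_cancellation_general {ι R : Type*} [Preorder ι]
    [LocallyFiniteOrderBot ι] [DecidableEq ι] [Monoid R] [HasDistribNeg R] {u w : ι → ℕ} {i j : ι}
    (hij : i < j) (hi : Odd (u i + w i)) (hagree : ∀ k < j, k ≠ i → u k = w k) (a b : ℕ) :
    Odd (signExponent u j + signExponent (Function.update w i a) i
        + signExponent u i + signExponent (Function.update w j b) j) ∧
    (-1 : R) ^ (signExponent u j + signExponent (Function.update w i a) i)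
      = -(-1) ^ (signExponent u i + signExponent (Function.update w j b) j) := by
  have direction_i : signExponent u i = signExponent w i :=
    signExponent_congr fun k hk => hagree k (hk.trans hij) hk.ne
  have direction_j : signExponent u j + w i = signExponent w j + u i := by
    have huw : ∀ k < j, u k = Function.update w i (u i) k := fun k hk => by
      rcases eq_or_ne k i with rfl | hki
      · rw [Function.update_self]
      · rw [Function.update_of_ne hki, hagree k hk hki]
    rw [signExponent_congr huw, signExponent_update_add_of_lt w hij]
  have total_odd : Odd (signExponent u j + signExponent (Function.update w i a) i
      + (signExponent u i + signExponent (Function.update w j b) j)) := by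
    rw [signExponent_update_of_not_lt w (lt_irrefl i),
      signExponent_update_of_not_lt w (lt_irrefl j), direction_i]
    rw [Nat.odd_iff] at hi ⊢
    omega
  exact ⟨by rwa [add_assoc _ (signExponent u i)], neg_one_pow_eq_neg_of_odd_add total_odd⟩

/-- Sign cancellation in the Khovanov differential.  Let `u, w` be `0–1` vectors with
`w ≤ u` and `∑ u = ∑ w + 2`, differing exactly at the two positions `i < j`.  Let
`v₁ = w` updated with `1` at `i` and `v₂ = w` updated with `1` at `j` (the two intermediate
vertices of the square from `w` to `u` in the resolution cube).  With
`s₀(x, y) = ∑_{k < m} x k` for vectors differing at the single position `m`, the total sign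
exponent `s₀(u,v₁) + s₀(v₁,w) + s₀(u,v₂) + s₀(v₂,w)` is odd; equivalently the two
length-two paths contribute opposite signs, so the Khovanov differential squares to zero. -/
theorem khovanov_square_sign_cancellation (n : ℕ) (u w : Fin n → ℕ)
    (hu01 : ∀ k, u k = 0 ∨ u k = 1) (hw01 : ∀ k, w k = 0 ∨ w k = 1)
    (hle : ∀ k, w k ≤ u k) (hsum : ∑ k, u k = (∑ k, w k) + 2)
    (i j : Fin n) (hij : i < j)
    (hwi : w i = 0) (hui : u i = 1) (hwj : w j = 0) (huj : u j = 1)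
    (hagree : ∀ k, k ≠ i → k ≠ j → u k = w k) :
    Odd ((∑ k ∈ Finset.Iio j, u k)
        + (∑ k ∈ Finset.Iio i, Function.update w i 1 k)
        + (∑ k ∈ Finset.Iio i, u k)
        + (∑ k ∈ Finset.Iio j, Function.update w j 1 k)) ∧
    ((-1 : ℤ) ^ ((∑ k ∈ Finset.Iio j, u k) + (∑ k ∈ Finset.Iio i, Function.update w i 1 k))
      = -(-1 : ℤ) ^ ((∑ k ∈ Finset.Iio i, u k)
          + (∑ k ∈ Finset.Iio j, Function.update w j 1 k))) :=
  khovanov_square_sign_cancellation_general hij (by simp [hui, hwi])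
    (fun k hkj hki => hagree k hki hkj.ne) 1 1
end
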